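/- Under the adapted pure-frontal setup with focal data, assume κ_t(0) ≠ 0, that 0 is a singular point of C_j (equivalently r_c(0) = 0), and that x_j is nonzero near 0 so that e_j = x_j/‖x_j‖ is a unit normal of C_j. Then the derivative of e_j in the direction of the principal vector field V_j vanishes at 0: d(e_j)(V_j)(0) = 0. Consequently the pair (C_j, e_j) : ℝ² → ℝ³ × ℝ³ is not an immersion at 0, i.e. C_j is a frontal with unit normal e_j but not a front at 0. -/

import Mathlib

open Filter

noncomputable section

/-- Vectors in ℝ³, modeled as `Fin 3 → ℝ`. -/
abbrev R3 : Type := Fin 3 → ℝ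

/-- The Euclidean inner product on ℝ³. -/
def dot3 (a b : R3) : ℝ := a 0 * b 0 + a 1 * b 1 + a 2 * b 2

/-- The Euclidean norm on ℝ³. -/
def norm3 (a : R3) : ℝ := Real.sqrt (dot3 a a)

/-- Partial derivative in the `u`-direction. -/
def pu {E : Type*} [NormedAddCommGroup E] [NormedSpace ℝ E] (F : ℝ × ℝ → E) (p : ℝ × ℝ) : E :=
  fderiv ℝ F p (1, 0)

/-- Partial derivative in the `v`-direction. -/
def pv {E : Type*} [NormedAddCommGroup E] [NormedSpace ℝ E] (F : ℝ × ℝ → E) (p : ℝ × ℝ) : E :=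
  fderiv ℝ F p (0, 1)

/-- The adapted pure-frontal setup: `f` is a frontal with unit normal `ν`,
`f_v = v·h`, `ν_v = v·ν₁`, the frame `{f_u, h, ν}` is linearly independent everywhere
and orthonormal along the `u`-axis. -/
structure AdaptedPureFrontal (f ν h ν₁ : ℝ × ℝ → R3) : Prop where
  smooth_f : ContDiff ℝ (⊤ : ℕ∞) f
  smooth_ν : ContDiff ℝ (⊤ : ℕ∞) ν
  smooth_h : ContDiff ℝ (⊤ : ℕ∞) h
  smooth_ν₁ : ContDiff ℝ (⊤ : ℕ∞) ν₁
  unit_ν : ∀ p, dot3 (ν p) (ν p) = 1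
  orth_fu_ν : ∀ p, dot3 (pu f p) (ν p) = 0
  orth_fv_ν : ∀ p, dot3 (pv f p) (ν p) = 0
  fv_eq : ∀ p : ℝ × ℝ, pv f p = p.2 • h p
  νv_eq : ∀ p : ℝ × ℝ, pv ν p = p.2 • ν₁ p
  indep : ∀ p, LinearIndependent ℝ ![pu f p, h p, ν p]
  adapted_fu : ∀ u : ℝ, dot3 (pu f (u, 0)) (pu f (u, 0)) = 1
  adapted_h : ∀ u : ℝ, dot3 (h (u, 0)) (h (u, 0)) = 1
  adapted_fu_h : ∀ u : ℝ, dot3 (pu f (u, 0)) (h (u, 0)) = 0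
  adapted_h_ν : ∀ u : ℝ, dot3 (h (u, 0)) (ν (u, 0)) = 0

/-- Ẽ = ⟨f_u, f_u⟩. -/
def Et (f : ℝ × ℝ → R3) (p : ℝ × ℝ) : ℝ := dot3 (pu f p) (pu f p)

/-- F̃ = ⟨f_u, h⟩. -/
def Ft (f h : ℝ × ℝ → R3) (p : ℝ × ℝ) : ℝ := dot3 (pu f p) (h p)

/-- G̃ = ⟨h, h⟩. -/
def Gt (h : ℝ × ℝ → R3) (p : ℝ × ℝ) : ℝ := dot3 (h p) (h p)

/-- L̃ = −⟨f_u, ν_u⟩. -/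
def Lt (f ν : ℝ × ℝ → R3) (p : ℝ × ℝ) : ℝ := -dot3 (pu f p) (pu ν p)

/-- M̃ = −⟨h, ν_u⟩. -/
def Mt (h ν : ℝ × ℝ → R3) (p : ℝ × ℝ) : ℝ := -dot3 (h p) (pu ν p)

/-- Ñ₁ = −⟨h, ν₁⟩. -/
def Nt1 (h ν₁ : ℝ × ℝ → R3) (p : ℝ × ℝ) : ℝ := -dot3 (h p) (ν₁ p)

/-- The Gaussian curvature K = (L̃Ñ₁ − M̃²)/(ẼG̃ − F̃²). -/
def Kg (f ν h ν₁ : ℝ × ℝ → R3) (p : ℝ × ℝ) : ℝ :=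
  (Lt f ν p * Nt1 h ν₁ p - Mt h ν p ^ 2) / (Et f p * Gt h p - Ft f h p ^ 2)

/-- The mean curvature H = (ẼÑ₁ − 2F̃M̃ + G̃L̃)/(2(ẼG̃ − F̃²)). -/
def Hm (f ν h ν₁ : ℝ × ℝ → R3) (p : ℝ × ℝ) : ℝ :=
  (Et f p * Nt1 h ν₁ p - 2 * Ft f h p * Mt h ν p + Gt h p * Lt f ν p) /
    (2 * (Et f p * Gt h p - Ft f h p ^ 2))

/-- The principal curvature κ = H + ε√(H² − K); `ε = 1` gives κ₁ and `ε = -1` gives κ₂. -/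
def kap (f ν h ν₁ : ℝ × ℝ → R3) (ε : ℝ) (p : ℝ × ℝ) : ℝ :=
  Hm f ν h ν₁ p + ε * Real.sqrt (Hm f ν h ν₁ p ^ 2 - Kg f ν h ν₁ p)

/-- First component of the principal vector field V = −v(M̃ − κF̃)∂_u + (L̃ − κẼ)∂_v. -/
def V1c (f ν h ν₁ : ℝ × ℝ → R3) (ε : ℝ) (p : ℝ × ℝ) : ℝ :=
  -(p.2 * (Mt h ν p - kap f ν h ν₁ ε p * Ft f h p))

/-- Second component of the principal vector field V = −v(M̃ − κF̃)∂_u + (L̃ − κẼ)∂_v. -/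
def V2c (f ν h ν₁ : ℝ × ℝ → R3) (ε : ℝ) (p : ℝ × ℝ) : ℝ :=
  Lt f ν p - kap f ν h ν₁ ε p * Et f p

/-- Directional derivative of `g` along the principal vector field V. -/
def VD (f ν h ν₁ : ℝ × ℝ → R3) (ε : ℝ) {E : Type*} [NormedAddCommGroup E] [NormedSpace ℝ E]
    (g : ℝ × ℝ → E) (p : ℝ × ℝ) : E :=
  V1c f ν h ν₁ ε p • pu g p + V2c f ν h ν₁ ε p • pv g p

/-- The radius of principal curvature ρ = 1/κ. -/
def rho (f ν h ν₁ : ℝ × ℝ → R3) (ε : ℝ) (p : ℝ × ℝ) : ℝ := (kap f ν h ν₁ ε p)⁻¹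

/-- The focal surface C = f + ρ·ν. -/
def Cf (f ν h ν₁ : ℝ × ℝ → R3) (ε : ℝ) (p : ℝ × ℝ) : R3 :=
  f p + rho f ν h ν₁ ε p • ν p

/-- The normal direction x = −(M̃ − κF̃)·f_u + (L̃ − κẼ)·h of the focal surface. -/
def xj (f ν h ν₁ : ℝ × ℝ → R3) (ε : ℝ) (p : ℝ × ℝ) : R3 :=
  (-(Mt h ν p - kap f ν h ν₁ ε p * Ft f h p)) • pu f p +
    (Lt f ν p - kap f ν h ν₁ ε p * Et f p) • h p

/-- The unit normal e = x/‖x‖ of the focal surface. -/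
def ej (f ν h ν₁ : ℝ × ℝ → R3) (ε : ℝ) (p : ℝ × ℝ) : R3 :=
  (norm3 (xj f ν h ν₁ ε p))⁻¹ • xj f ν h ν₁ ε p

/-- The limiting normal curvature κ_ν(u) = L̃(u,0). -/
def kν (f ν : ℝ × ℝ → R3) (u : ℝ) : ℝ := Lt f ν (u, 0)

/-- The cuspidal torsion κ_t(u) = M̃(u,0). -/
def kt (h ν : ℝ × ℝ → R3) (u : ℝ) : ℝ := Mt h ν (u, 0)

/-- The bias r_b(u) = 3Ñ₁(u,0). -/
def rb (h ν₁ : ℝ × ℝ → R3) (u : ℝ) : ℝ := 3 * Nt1 h ν₁ (u, 0)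

/-- The secondary cuspidal curvature r_c(u) = 24((Ñ₁)_v − 2F̃_vM̃ − G̃_vÑ₁)(u,0). -/
def rc (f ν h ν₁ : ℝ × ℝ → R3) (u : ℝ) : ℝ :=
  24 * (pv (Nt1 h ν₁) (u, 0) - 2 * pv (Ft f h) (u, 0) * Mt h ν (u, 0) -
    pv (Gt h) (u, 0) * Nt1 h ν₁ (u, 0))

/-- The singular curvature κ_s(u) = ⟨f_uu, h⟩(u,0). -/
def ks (f h : ℝ × ℝ → R3) (u : ℝ) : ℝ := dot3 (pu (pu f) (u, 0)) (h (u, 0))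

/-- The rank of the differential of `F` at `p`. -/
def rankAt (F : ℝ × ℝ → R3) (p : ℝ × ℝ) : ℕ :=
  Module.finrank ℝ (LinearMap.range (fderiv ℝ F p).toLinearMap)


lemma aux_dot {a b : ℝ → R3} {a' b' : R3} {t : ℝ} (ha : HasDerivAt a a' t)
    (hb : HasDerivAt b b' t) :
    HasDerivAt (fun s => dot3 (a s) (b s)) (dot3 a' (b t) + dot3 (a t) b') t := by
  have ha' := hasDerivAt_pi.1 ha
  have hb' := hasDerivAt_pi.1 hb
  have := (((ha' 0).mul (hb' 0)).add ((ha' 1).mul (hb' 1))).add ((ha' 2).mul (hb' 2))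
  refine (this.congr_deriv ?_)
  simp only [dot3]; ring

lemma aux_curve {E : Type*} [NormedAddCommGroup E] [NormedSpace ℝ E] {g : ℝ × ℝ → E}
    (hg : DifferentiableAt ℝ g 0) :
    HasDerivAt (fun t : ℝ => g (0, t)) (pv g 0) 0 := by
  have h1 : HasDerivAt (fun t : ℝ => ((0 : ℝ), t)) ((0 : ℝ), (1 : ℝ)) 0 :=
    (hasDerivAt_const _ _).prodMk (hasDerivAt_id _)
  exact HasFDerivAt.comp_hasDerivAt (f := fun t : ℝ => ((0 : ℝ), t)) (0 : ℝ) hg.hasFDerivAt h1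

lemma aux_pv {E : Type*} [NormedAddCommGroup E] [NormedSpace ℝ E] {g : ℝ × ℝ → E} {g' : E}
    (hg : DifferentiableAt ℝ g 0) (h : HasDerivAt (fun t : ℝ => g (0, t)) g' 0) :
    pv g 0 = g' := (aux_curve hg).unique h

lemma aux_smooth_dot {a b : ℝ × ℝ → R3} (ha : Differentiable ℝ a) (hb : Differentiable ℝ b) :
    Differentiable ℝ (fun p => dot3 (a p) (b p)) := by
  have ha' := differentiable_pi.1 ha
  have hb' := differentiable_pi.1 hb
  exact (((ha' 0).mul (hb' 0)).add ((ha' 1).mul (hb' 1))).add ((ha' 2).mul (hb' 2))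

lemma aux_pu_smooth {g : ℝ × ℝ → R3} (hg : ContDiff ℝ (⊤ : ℕ∞) g) :
    Differentiable ℝ (pu g) := by
  have : ContDiff ℝ 1 (fderiv ℝ g) := hg.fderiv_right (by norm_cast)
  have h2 := this.differentiable (by norm_num)
  exact fun p => (h2 p).clm_apply (differentiableAt_const _)

lemma aux_mixed {g k : ℝ × ℝ → R3} (hg : ContDiff ℝ (⊤ : ℕ∞) g) (hk : Differentiable ℝ k)
    (h : ∀ p : ℝ × ℝ, pv g p = p.2 • k p) : pv (pu g) 0 = 0 := by
  have h1 : ContDiff ℝ 1 (fderiv ℝ g) := hg.fderiv_right (by norm_cast)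
  have h2 := h1.differentiable (by norm_num)
  have sym : IsSymmSndFDerivAt ℝ g 0 := hg.contDiffAt.isSymmSndFDerivAt (by
    rw [minSmoothness_of_isRCLikeNormedField]; exact WithTop.coe_le_coe.2 (le_top : (2 : ℕ∞) ≤ ⊤))
  have e1 : pv (pu g) 0 = fderiv ℝ (fderiv ℝ g) 0 (0, 1) (1, 0) := by
    have := (h2 0).hasFDerivAt.clm_apply (hasFDerivAt_const ((1 : ℝ), (0 : ℝ)) (0 : ℝ × ℝ))
    unfold pv
    rw [show pu g = fun p => fderiv ℝ g p (1, 0) from rfl, this.fderiv]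
    simp
  have e2 : pu (pv g) 0 = fderiv ℝ (fderiv ℝ g) 0 (1, 0) (0, 1) := by
    have := (h2 0).hasFDerivAt.clm_apply (hasFDerivAt_const ((0 : ℝ), (1 : ℝ)) (0 : ℝ × ℝ))
    unfold pu
    rw [show pv g = fun p => fderiv ℝ g p (0, 1) from rfl, this.fderiv]
    simp
  rw [e1, sym.eq, ← e2]
  have e3 : pv g = fun p : ℝ × ℝ => p.2 • k p := funext h
  unfold pu
  have e4 : HasFDerivAt (fun p : ℝ × ℝ => p.2 • k p) _ 0 :=
    (hasFDerivAt_snd (𝕜 := ℝ) (p := (0 : ℝ × ℝ))).smul (hk 0).hasFDerivAt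
  rw [e3, e4.fderiv]
  simp

lemma aux_expand {a b n : R3} (haa : dot3 a a = 1) (hbb : dot3 b b = 1) (hnn : dot3 n n = 1)
    (hab : dot3 a b = 0) (han : dot3 a n = 0) (hbn : dot3 b n = 0) (x : R3) :
    x = dot3 a x • a + dot3 b x • b + dot3 n x • n := by
  let A : Matrix (Fin 3) (Fin 3) ℝ := Matrix.of ![a, b, n]
  have hA : A * A.transpose = 1 := by
    simp only [dot3] at *
    ext i j
    fin_cases i <;> fin_cases j <;>
      simp [A, Matrix.mul_apply, Fin.sum_univ_three] <;> linarith
  have hA' := mul_eq_one_comm.1 hA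
  have key : A.transpose.mulVec (A.mulVec x) = x := by
    rw [Matrix.mulVec_mulVec, hA', Matrix.one_mulVec]
  conv_lhs => rw [← key]
  ext i
  simp only [dot3]
  simp [A, Matrix.mulVec, dotProduct, Fin.sum_univ_three]
  ring

lemma dot3_lin (x y z : R3) (c d : ℝ) : dot3 (c • x + d • y) z = c * dot3 x z + d * dot3 y z := by
  simp [dot3]; ring

lemma dot3_comm (x y : R3) : dot3 x y = dot3 y x := by
  simp [dot3]; ring

lemma dot3_zl (x : R3) : dot3 0 x = 0 := by simp [dot3]

lemma dot3_zr (x : R3) : dot3 x 0 = 0 := by simp [dot3]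

lemma dot3_pos {x : R3} (hx : x ≠ 0) : 0 < dot3 x x := by
  by_contra hn
  apply hx
  simp only [dot3] at hn
  have h0 := mul_self_nonneg (x 0)
  have h1 := mul_self_nonneg (x 1)
  have h2 := mul_self_nonneg (x 2)
  ext i
  fin_cases i
  · exact (mul_self_eq_zero.1 (by linarith) : x 0 = 0)
  · exact (mul_self_eq_zero.1 (by linarith) : x 1 = 0)
  · exact (mul_self_eq_zero.1 (by linarith) : x 2 = 0)

lemma aux_normalize {x : ℝ → R3} {c : ℝ} (hx : HasDerivAt x (c • x 0) 0) (h0 : x 0 ≠ 0) :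
    HasDerivAt (fun t => (norm3 (x t))⁻¹ • x t) 0 0 := by
  have hp := dot3_pos h0
  have hs := Real.sqrt_pos.2 hp
  have h1 := aux_dot hx hx
  have h2 := (h1.sqrt hp.ne').inv hs.ne'
  have h3 := h2.smul hx
  refine h3.congr_deriv ?_
  have e : dot3 (c • x 0) (x 0) + dot3 (x 0) (c • x 0) = 2 * c * dot3 (x 0) (x 0) := by
    simp [dot3]; ring
  have hsq := Real.sq_sqrt hp.le
  rw [e]
  simp only [Pi.inv_apply, smul_smul, ← add_smul]
  convert zero_smul ℝ (x 0)
  rw [hsq]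
  field_simp
  ring

lemma aux_main (f ν h ν₁ : ℝ × ℝ → R3) (H : AdaptedPureFrontal f ν h ν₁) (ε : ℝ)
    (hHK : ∀ p : ℝ × ℝ, Hm f ν h ν₁ p ^ 2 - Kg f ν h ν₁ p > 0) (hrc : rc f ν h ν₁ 0 = 0) :
    HasDerivAt (fun t : ℝ => kap f ν h ν₁ ε (0, t)) 0 0 ∧
    ∃ c : ℝ, HasDerivAt (fun t : ℝ => xj f ν h ν₁ ε (0, t)) (c • xj f ν h ν₁ ε (0, 0)) 0 := by
  have dh := H.smooth_h.differentiable (by simp)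
  have dν := H.smooth_ν.differentiable (by simp)
  have dν₁ := H.smooth_ν₁.differentiable (by simp)
  have dfu := aux_pu_smooth H.smooth_f
  have dνu := aux_pu_smooth H.smooth_ν
  have cfu := aux_curve (dfu 0)
  rw [aux_mixed H.smooth_f dh H.fv_eq] at cfu
  have cνu := aux_curve (dνu 0)
  rw [aux_mixed H.smooth_ν dν₁ H.νv_eq] at cνu
  have ch := aux_curve (dh 0)
  have cν := aux_curve (dν 0)
  rw [H.νv_eq 0] at cν
  simp only [Prod.snd_zero, zero_smul] at cν
  have cν₁ := aux_curve (dν₁ 0)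
  set hv := pv h 0 with hhv
  set mv := pv ν₁ 0 with hmv
  have cE : HasDerivAt (fun t : ℝ => Et f (0, t)) _ 0 := aux_dot cfu cfu
  have cF : HasDerivAt (fun t : ℝ => Ft f h (0, t)) _ 0 := aux_dot cfu ch
  have cG : HasDerivAt (fun t : ℝ => Gt h (0, t)) _ 0 := aux_dot ch ch
  have cL : HasDerivAt (fun t : ℝ => Lt f ν (0, t)) _ 0 := (aux_dot cfu cνu).neg
  have cM : HasDerivAt (fun t : ℝ => Mt h ν (0, t)) _ 0 := (aux_dot ch cνu).neg
  have cN : HasDerivAt (fun t : ℝ => Nt1 h ν₁ (0, t)) _ 0 := (aux_dot ch cν₁).neg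
  have pF := aux_pv (g := Ft f h) (aux_smooth_dot dfu dh 0) cF
  have pG := aux_pv (g := Gt h) (aux_smooth_dot dh dh 0) cG
  have pN := aux_pv (g := Nt1 h ν₁) ((aux_smooth_dot dh dν₁).neg 0) cN
  have hhν : ∀ t : ℝ, dot3 (h (0, t)) (ν (0, t)) = 0 := by
    intro t
    by_cases ht : t = 0
    · rw [ht]; exact H.adapted_h_ν 0
    · have := H.orth_fv_ν (0, t)
      rw [H.fv_eq] at this
      simp only [dot3, Pi.smul_apply, smul_eq_mul] at this ⊢
      have h2 : t * (h (0, t) 0 * ν (0, t) 0 + h (0, t) 1 * ν (0, t) 1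
        + h (0, t) 2 * ν (0, t) 2) = 0 := by linarith
      exact (mul_eq_zero.1 h2).resolve_left ht
  have hνhv : dot3 (ν (0, 0)) hv = 0 := by
    have h1 := aux_dot ch cν
    have h2 : (fun s : ℝ => dot3 (h (0, s)) (ν (0, s))) = fun _ => 0 := funext hhν
    rw [h2] at h1
    have := h1.unique (hasDerivAt_const (0 : ℝ) (0 : ℝ))
    rw [dot3_zr, add_zero] at this
    rw [dot3_comm]; exact this
  have aE : Et f (0, 0) = 1 := H.adapted_fu 0
  have aG : Gt h (0, 0) = 1 := H.adapted_h 0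
  have aF : Ft f h (0, 0) = 0 := H.adapted_fu_h 0
  have hexp := aux_expand (H.adapted_fu 0) (H.adapted_h 0) (H.unit_ν (0, 0))
    (H.adapted_fu_h 0) (H.orth_fu_ν (0, 0)) (H.adapted_h_ν 0) hv
  rw [hνhv, zero_smul, add_zero] at hexp
  set Fv := dot3 (pu f (0, 0)) hv with hFv
  set g := dot3 (h (0, 0)) hv with hg
  have cE' : HasDerivAt (fun t : ℝ => Et f (0, t)) 0 0 :=
    cE.congr_deriv (by rw [dot3_zl, dot3_zr, add_zero])
  have cF' : HasDerivAt (fun t : ℝ => Ft f h (0, t)) Fv 0 :=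
    cF.congr_deriv (by rw [dot3_zl, zero_add])
  have cG' : HasDerivAt (fun t : ℝ => Gt h (0, t)) (2 * g) 0 :=
    cG.congr_deriv (by rw [dot3_comm hv, ← hg]; ring)
  have cL' : HasDerivAt (fun t : ℝ => Lt f ν (0, t)) 0 0 :=
    cL.congr_deriv (by rw [dot3_zl, dot3_zr, add_zero, neg_zero])
  have cM' : HasDerivAt (fun t : ℝ => Mt h ν (0, t))
      (Fv * Lt f ν (0, 0) + g * Mt h ν (0, 0)) 0 :=
    cM.congr_deriv (by
      rw [dot3_zr, add_zero, hexp, dot3_lin]; simp only [Lt, Mt]; ring)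
  have cN' : HasDerivAt (fun t : ℝ => Nt1 h ν₁ (0, t))
      (2 * Fv * Mt h ν (0, 0) + 2 * g * Nt1 h ν₁ (0, 0)) 0 := by
    refine cN.congr_deriv ?_
    rw [← pN]
    have pF' : pv (Ft f h) (0, 0) = Fv := (aux_curve (aux_smooth_dot dfu dh 0)).unique cF'
    have pG' : pv (Gt h) (0, 0) = 2 * g := (aux_curve (aux_smooth_dot dh dh 0)).unique cG'
    have := hrc
    simp only [rc, pF', pG'] at this
    have z : (0 : ℝ × ℝ) = (0, 0) := rfl
    rw [z]
    linarith
  have cD := (cE'.mul cG').sub (cF'.pow 2)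
  have hK : HasDerivAt (fun t : ℝ => Kg f ν h ν₁ (0, t)) 0 0 := by
    refine (((cL'.mul cN').sub (cM'.pow 2)).div cD ?_).congr_deriv ?_
    · simp [aE, aF, aG]
    · simp [aE, aF, aG]; ring
  have hH : HasDerivAt (fun t : ℝ => Hm f ν h ν₁ (0, t)) 0 0 := by
    refine ((((cE'.mul cN').sub ((cF'.const_mul 2).mul cM')).add (cG'.mul cL')).div
      (cD.const_mul 2) ?_).congr_deriv ?_
    · simp [aE, aF, aG]
    · simp [aE, aF, aG]; ring
  have hk : HasDerivAt (fun t : ℝ => kap f ν h ν₁ ε (0, t)) 0 0 := by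
    refine (hH.add ((((hH.pow 2).sub hK).sqrt (hHK (0, 0)).ne').const_mul ε)).congr_deriv ?_
    simp
  refine ⟨hk, g, ?_⟩
  have cx := ((cM'.sub (hk.mul cF')).neg.smul cfu).add ((cL'.sub (hk.mul cE')).smul ch)
  refine cx.congr_deriv ?_
  rw [hexp]
  ext i
  simp [xj, aE, aF, aG]
  ring

/-- if κ_t(0) ≠ 0 and 0 is a singular point of C_j (equivalently
r_c(0) = 0), then d(e_j)(V_j)(0) = 0 and (C_j, e_j) is not an immersion at 0, i.e.
C_j is a frontal with unit normal e_j but not a front at 0. -/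
theorem stmt_13 (f ν h ν₁ : ℝ × ℝ → R3) (H : AdaptedPureFrontal f ν h ν₁)
    (ε : ℝ) (hε : ε = 1 ∨ ε = -1)
    (hHK : ∀ p : ℝ × ℝ, Hm f ν h ν₁ p ^ 2 - Kg f ν h ν₁ p > 0)
    (hκ : ∀ p : ℝ × ℝ, kap f ν h ν₁ ε p ≠ 0)
    (hkt : kt h ν 0 ≠ 0) (hrc : rc f ν h ν₁ 0 = 0)
    (hx : ∀ᶠ p in nhds (0 : ℝ × ℝ), xj f ν h ν₁ ε p ≠ 0) :
    VD f ν h ν₁ ε (ej f ν h ν₁ ε) 0 = 0 ∧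
    ¬ Function.Injective
        ⇑(fderiv ℝ (fun p : ℝ × ℝ => (Cf f ν h ν₁ ε p, ej f ν h ν₁ ε p)) 0) := by
  obtain ⟨hk, c, hxd⟩ := aux_main f ν h ν₁ H ε hHK hrc
  have hx0 : xj f ν h ν₁ ε (0, 0) ≠ 0 := hx.self_of_nhds
  have he : HasDerivAt (fun t : ℝ => ej f ν h ν₁ ε (0, t)) 0 0 := aux_normalize hxd hx0
  have hpe : pv (ej f ν h ν₁ ε) 0 = 0 := by
    by_cases hd : DifferentiableAt ℝ (ej f ν h ν₁ ε) 0
    · exact aux_pv hd he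
    · simp [pv, fderiv_zero_of_not_differentiableAt hd]
  have dν := H.smooth_ν.differentiable (by simp)
  have df := H.smooth_f.differentiable (by simp)
  have cf := aux_curve (df 0)
  have cν := aux_curve (dν 0)
  rw [H.fv_eq 0] at cf
  rw [H.νv_eq 0] at cν
  simp only [Prod.snd_zero, zero_smul] at cν cf
  have hC : HasDerivAt (fun t : ℝ => Cf f ν h ν₁ ε (0, t)) 0 0 := by
    refine (cf.add ((hk.inv (hκ (0, 0))).smul cν)).congr_deriv ?_
    simp
  refine ⟨?_, ?_⟩
  · simp [VD, hpe, V1c]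
  · intro hinj
    have hz : pv (fun p : ℝ × ℝ => (Cf f ν h ν₁ ε p, ej f ν h ν₁ ε p)) 0 = 0 := by
      by_cases hd : DifferentiableAt ℝ
          (fun p : ℝ × ℝ => (Cf f ν h ν₁ ε p, ej f ν h ν₁ ε p)) 0
      · exact aux_pv hd (hC.prodMk he)
      · simp [pv, fderiv_zero_of_not_differentiableAt hd]
    have := @hinj (0, 1) 0 (by rw [map_zero]; exact hz)
    simp at this
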